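/- Let D_X > 0, suppose some channel in ℛ_X(D_X;X) attains the minimal induced intermediate distortion D_Y^min = min 𝒟*_Y(D_X;X), and suppose that for every channel k ∈ ℛ_X(D_X;X) with E[d_Y(g(X), g(X̂))] = D_Y^min there exist two points x̂₁ ≠ x̂₂ with nonzero marginal probabilities P(X̂ = x̂₁) > 0 and P(X̂ = x̂₂) > 0, identical intermediate representation g(x̂₁) = g(x̂₂), and at least one input x with P(X = x | X̂ = x̂₁) ≠ P(X = x | X̂ = x̂₂). Then the minimal achievable rate of distilling the intermediate layer directly is strictly lower than the input rate-distortion function: R_X(D_Y^min;Y) < R_X(D_X;X). -/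

import Mathlib

open scoped BigOperators

/-- Joint distribution P(a,b) = p(a)·k(a)(b) induced by a source `p` and a channel `k`,
as a real number. -/
noncomputable def jointP {A B : Type*} [Fintype A] [Fintype B] (p : PMF A) (k : A → PMF B)
    (a : A) (b : B) : ℝ :=
  (p a * k a b).toReal

/-- Marginal distribution of the second coordinate of the joint induced by `(p, k)`. -/
noncomputable def margSnd {A B : Type*} [Fintype A] [Fintype B] (p : PMF A) (k : A → PMF B)
    (b : B) : ℝ :=
  ∑ a, jointP p k a b

/-- Mutual information I(A;B) = ∑_{a,b} P(a,b)·log(P(a,b)/(P(a)·P(b))) of the joint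
induced by `(p, k)`; the convention 0·log 0 = 0 holds automatically in Lean. -/
noncomputable def mutualInfo {A B : Type*} [Fintype A] [Fintype B] (p : PMF A)
    (k : A → PMF B) : ℝ :=
  ∑ a, ∑ b, jointP p k a b * Real.log (jointP p k a b / ((p a).toReal * margSnd p k b))

/-- Expected distortion E[d(A,B)] under the joint induced by `(p, k)`. -/
noncomputable def expDist {A B : Type*} [Fintype A] [Fintype B] (p : PMF A) (k : A → PMF B)
    (d : A → B → ℝ) : ℝ :=
  ∑ a, ∑ b, jointP p k a b * d a b

/-- Rate-distortion function: infimum of mutual information over all channels `A → PMF B`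
meeting the expected-distortion constraint `≤ D`. -/
noncomputable def rate {A B : Type*} [Fintype A] [Fintype B] (p : PMF A) (d : A → B → ℝ)
    (D : ℝ) : ℝ :=
  sInf { r : ℝ | ∃ k : A → PMF B, expDist p k d ≤ D ∧ r = mutualInfo p k }

/-- Conditional probability P(A = a | B = b) under the joint induced by `(p, k)`. -/
noncomputable def condProb {A B : Type*} [Fintype A] [Fintype B] (p : PMF A) (k : A → PMF B)
    (a : A) (b : B) : ℝ :=
  jointP p k a b / margSnd p k b

/-!
Merge all reconstruction points with the same feature, i.e. replace `X̂` by a representative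
`f(X̂)` of its fibre under `g`. The feature distortion does not change. The mutual information drops
by `D(P ‖ Q)`, where `Q` keeps the law of `X̂` but replaces the posterior of `X` given `X̂` by its
posterior given `f(X̂)`. If two merged points have different posteriors then `P ≠ Q`, so by Gibbs'
inequality the drop is strictly positive.
-/

section RelativeEntropy

open InformationTheory

variable {ι : Type*} [Fintype ι] {P Q : ι → ℝ}

/-- The relative entropy `D(P ‖ Q)` of two weight functions on a finite type. An index with
`Q i = 0` contributes `0` rather than `∞`, so this is the usual notion only if `P` vanishes
wherever `Q` does. -/
noncomputable def relEntropy (P Q : ι → ℝ) : ℝ :=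
  ∑ i, P i * Real.log (P i / Q i)

theorem relEntropy_eq_sum_mul_klFun (hPQ : ∀ i, Q i = 0 → P i = 0)
    (hsum : ∑ i, P i = ∑ i, Q i) :
    relEntropy P Q = ∑ i, Q i * klFun (P i / Q i) := by
  have hterm (i : ι) :
      Q i * klFun (P i / Q i) = P i * Real.log (P i / Q i) + (Q i - P i) := by
    by_cases hQ : Q i = 0
    · simp only [hQ, hPQ i hQ, zero_mul, sub_zero, add_zero]
    · rw [klFun_apply]
      field_simp
      ring
  simp only [hterm, Finset.sum_add_distrib, Finset.sum_sub_distrib, hsum, sub_self, add_zero,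
    relEntropy]

theorem relEntropy_nonneg (hP : ∀ i, 0 ≤ P i) (hQ : ∀ i, 0 ≤ Q i)
    (hPQ : ∀ i, Q i = 0 → P i = 0) (hsum : ∑ i, P i = ∑ i, Q i) : 0 ≤ relEntropy P Q := by
  rw [relEntropy_eq_sum_mul_klFun hPQ hsum]
  exact Finset.sum_nonneg fun i _ => mul_nonneg (hQ i) (klFun_nonneg (div_nonneg (hP i) (hQ i)))

theorem relEntropy_pos (hP : ∀ i, 0 ≤ P i) (hQ : ∀ i, 0 ≤ Q i)
    (hPQ : ∀ i, Q i = 0 → P i = 0) (hsum : ∑ i, P i = ∑ i, Q i) (hne : P ≠ Q) :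
    0 < relEntropy P Q := by
  have hratio (i : ι) : 0 ≤ P i / Q i := div_nonneg (hP i) (hQ i)
  obtain ⟨i, hi⟩ := Function.ne_iff.1 hne
  have hQi : Q i ≠ 0 := fun h => hi ((hPQ i h).trans h.symm)
  have hklFun : klFun (P i / Q i) ≠ 0 := fun h =>
    hi ((div_eq_one_iff_eq hQi).1 ((klFun_eq_zero_iff (hratio i)).1 h))
  rw [relEntropy_eq_sum_mul_klFun hPQ hsum]
  exact Finset.sum_pos' (fun j _ => mul_nonneg (hQ j) (klFun_nonneg (hratio j)))
    ⟨i, Finset.mem_univ i,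
      mul_pos ((hQ i).lt_of_ne' hQi) ((klFun_nonneg (hratio i)).lt_of_ne' hklFun)⟩

end RelativeEntropy

theorem sum_toReal_pmf {α : Type*} [Fintype α] (q : PMF α) : ∑ a, (q a).toReal = 1 := by
  rw [← ENNReal.toReal_sum fun a _ => q.apply_ne_top a, ← tsum_fintype (L := .unconditional α) q,
    q.tsum_coe, ENNReal.toReal_one]

/-- The channel `k` followed by the deterministic map `f`. -/
noncomputable def postprocess {A B C : Type*} (k : A → PMF B) (f : B → C) : A → PMF C :=
  fun a => (k a).map f

section Channel

variable {A B C : Type*} [Fintype A] [Fintype B] (p : PMF A) (k : A → PMF B)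

theorem jointP_nonneg (a : A) (b : B) : 0 ≤ jointP p k a b :=
  ENNReal.toReal_nonneg

theorem margSnd_nonneg (b : B) : 0 ≤ margSnd p k b :=
  Finset.sum_nonneg fun a _ => jointP_nonneg p k a b

theorem condProb_nonneg (a : A) (b : B) : 0 ≤ condProb p k a b :=
  div_nonneg (jointP_nonneg p k a b) (margSnd_nonneg p k b)

theorem sum_jointP (a : A) : ∑ b, jointP p k a b = (p a).toReal := by
  simp only [jointP, ENNReal.toReal_mul, ← Finset.mul_sum, sum_toReal_pmf, mul_one]

theorem sum_margSnd : ∑ b, margSnd p k b = 1 := by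
  simp only [margSnd]
  rw [Finset.sum_comm]
  simp only [sum_jointP, sum_toReal_pmf]

theorem jointP_le_fst (a : A) (b : B) : jointP p k a b ≤ (p a).toReal :=
  (Finset.single_le_sum (fun b _ => jointP_nonneg p k a b) (Finset.mem_univ b)).trans_eq
    (sum_jointP p k a)

theorem jointP_le_margSnd (a : A) (b : B) : jointP p k a b ≤ margSnd p k b :=
  Finset.single_le_sum (fun a _ => jointP_nonneg p k a b) (Finset.mem_univ a)

theorem sum_condProb {b : B} (hb : margSnd p k b ≠ 0) : ∑ a, condProb p k a b = 1 := by
  simp only [condProb, ← Finset.sum_div]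
  exact div_self hb

theorem mutualInfo_eq_relEntropy :
    mutualInfo p k = relEntropy (fun x : A × B => jointP p k x.1 x.2)
      (fun x => (p x.1).toReal * margSnd p k x.2) := by
  simp only [mutualInfo, relEntropy, Fintype.sum_prod_type]

theorem mutualInfo_nonneg : 0 ≤ mutualInfo p k := by
  rw [mutualInfo_eq_relEntropy]
  refine relEntropy_nonneg (fun x => jointP_nonneg p k x.1 x.2)
    (fun x => mul_nonneg ENNReal.toReal_nonneg (margSnd_nonneg p k x.2)) (fun x hx => ?_) ?_
  · refine le_antisymm ?_ (jointP_nonneg p k x.1 x.2)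
    rcases mul_eq_zero.1 hx with hfst | hsnd
    · exact hfst ▸ jointP_le_fst p k x.1 x.2
    · exact hsnd ▸ jointP_le_margSnd p k x.1 x.2
  · simp only [Fintype.sum_prod_type, sum_jointP, ← Finset.mul_sum, sum_margSnd, mul_one]

theorem rate_le_mutualInfo {d : A → B → ℝ} {D : ℝ} (h : expDist p k d ≤ D) :
    rate p d D ≤ mutualInfo p k :=
  csInf_le ⟨0, by rintro _ ⟨k, -, rfl⟩; exact mutualInfo_nonneg p k⟩ ⟨k, h, rfl⟩

variable [Fintype C] (f : B → C)

theorem jointP_postprocess [DecidableEq C] (a : A) (c : C) :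
    jointP p (postprocess k f) a c = ∑ b with f b = c, jointP p k a b := by
  simp only [jointP, postprocess, PMF.map_apply, tsum_fintype, ENNReal.toReal_mul,
    ← Finset.mul_sum, eq_comm (a := c), ← Finset.sum_filter]
  rw [ENNReal.toReal_sum fun b _ => (k a).apply_ne_top b]

theorem sum_jointP_postprocess_mul (φ : C → ℝ) (a : A) :
    ∑ c, jointP p (postprocess k f) a c * φ c = ∑ b, jointP p k a b * φ (f b) := by
  classical
  rw [← Finset.sum_fiberwise Finset.univ f]
  refine Finset.sum_congr rfl fun c _ => ?_
  rw [jointP_postprocess, Finset.sum_mul]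
  exact Finset.sum_congr rfl fun b hb => by rw [(Finset.mem_filter.1 hb).2]

theorem expDist_postprocess (d : A → C → ℝ) :
    expDist p (postprocess k f) d = expDist p k fun a b => d a (f b) :=
  Finset.sum_congr rfl fun a _ => sum_jointP_postprocess_mul p k f (d a) a

theorem jointP_le_jointP_postprocess (a : A) (b : B) :
    jointP p k a b ≤ jointP p (postprocess k f) a (f b) := by
  classical
  rw [jointP_postprocess]
  exact Finset.single_le_sum (fun b _ => jointP_nonneg p k a b)
    (Finset.mem_filter.2 ⟨Finset.mem_univ b, rfl⟩)

theorem margSnd_le_margSnd_postprocess (b : B) :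
    margSnd p k b ≤ margSnd p (postprocess k f) (f b) :=
  Finset.sum_le_sum fun a _ => jointP_le_jointP_postprocess p k f a b

/-- The joint law `Q(a, b) = P(b) · P(a | f(b))`: it has the second marginal of `(p, k)`, and makes
the two coordinates conditionally independent given `f(b)`. -/
noncomputable def condIndepJoint (x : A × B) : ℝ :=
  margSnd p k x.2 * condProb p (postprocess k f) x.1 (f x.2)

theorem condIndepJoint_nonneg (x : A × B) : 0 ≤ condIndepJoint p k f x :=
  mul_nonneg (margSnd_nonneg p k x.2) (condProb_nonneg p _ x.1 (f x.2))

theorem jointP_eq_zero_of_condIndepJoint_eq_zero {x : A × B} (hx : condIndepJoint p k f x = 0) :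
    jointP p k x.1 x.2 = 0 := by
  by_contra hne
  have hJ : 0 < jointP p k x.1 x.2 := (jointP_nonneg p k x.1 x.2).lt_of_ne' hne
  have hM : 0 < margSnd p k x.2 := hJ.trans_le (jointP_le_margSnd p k x.1 x.2)
  have hcond : 0 < condProb p (postprocess k f) x.1 (f x.2) :=
    div_pos (hJ.trans_le (jointP_le_jointP_postprocess p k f x.1 x.2))
      (hM.trans_le (margSnd_le_margSnd_postprocess p k f x.2))
  exact (mul_pos hM hcond).ne' hx

theorem sum_condIndepJoint_fst (b : B) : ∑ a, condIndepJoint p k f (a, b) = margSnd p k b := by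
  simp only [condIndepJoint, ← Finset.mul_sum]
  rcases (margSnd_nonneg p k b).eq_or_lt with hb | hb
  · rw [← hb, zero_mul]
  · rw [sum_condProb p _ (hb.trans_le (margSnd_le_margSnd_postprocess p k f b)).ne', mul_one]

theorem condProb_eq_of_jointP_eq_condIndepJoint {a : A} {b : B} (hb : margSnd p k b ≠ 0)
    (h : jointP p k a b = condIndepJoint p k f (a, b)) :
    condProb p k a b = condProb p (postprocess k f) a (f b) := by
  rw [condProb, h, condIndepJoint, mul_div_cancel_left₀ _ hb]

theorem log_div_sub_log_div_postprocess {a : A} {b : B} (hJ : 0 < jointP p k a b) :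
    Real.log (jointP p k a b / ((p a).toReal * margSnd p k b)) -
      Real.log (jointP p (postprocess k f) a (f b) /
        ((p a).toReal * margSnd p (postprocess k f) (f b))) =
      Real.log (jointP p k a b / condIndepJoint p k f (a, b)) := by
  have hp : 0 < (p a).toReal := hJ.trans_le (jointP_le_fst p k a b)
  have hM : 0 < margSnd p k b := hJ.trans_le (jointP_le_margSnd p k a b)
  have hJ' : 0 < jointP p (postprocess k f) a (f b) :=
    hJ.trans_le (jointP_le_jointP_postprocess p k f a b)
  have hM' : 0 < margSnd p (postprocess k f) (f b) :=
    hM.trans_le (margSnd_le_margSnd_postprocess p k f b)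
  rw [← Real.log_div (by positivity) (by positivity), condIndepJoint, condProb]
  congr 1
  field_simp

theorem mutualInfo_sub_mutualInfo_postprocess :
    mutualInfo p k - mutualInfo p (postprocess k f) =
      relEntropy (fun x : A × B => jointP p k x.1 x.2) (condIndepJoint p k f) := by
  simp only [mutualInfo, relEntropy, Fintype.sum_prod_type]
  rw [← Finset.sum_sub_distrib]
  refine Finset.sum_congr rfl fun a _ => ?_
  rw [sum_jointP_postprocess_mul p k f (fun c =>
      Real.log (jointP p (postprocess k f) a c / ((p a).toReal * margSnd p (postprocess k f) c))),
    ← Finset.sum_sub_distrib]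
  refine Finset.sum_congr rfl fun b _ => ?_
  rcases (jointP_nonneg p k a b).eq_or_lt with hJ | hJ
  · simp only [← hJ, zero_mul, sub_zero]
  · rw [← mul_sub, log_div_sub_log_div_postprocess p k f hJ]

theorem mutualInfo_postprocess_lt {b₁ b₂ : B} (h₁ : 0 < margSnd p k b₁) (h₂ : 0 < margSnd p k b₂)
    (hf : f b₁ = f b₂) (hne : ∃ a, condProb p k a b₁ ≠ condProb p k a b₂) :
    mutualInfo p (postprocess k f) < mutualInfo p k := by
  rw [← sub_pos, mutualInfo_sub_mutualInfo_postprocess]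
  refine relEntropy_pos (fun x => jointP_nonneg p k x.1 x.2) (condIndepJoint_nonneg p k f)
    (fun _ => jointP_eq_zero_of_condIndepJoint_eq_zero p k f) ?_ fun hJ => ?_
  · simp only [Fintype.sum_prod_type_right, sum_condIndepJoint_fst, margSnd]
  · obtain ⟨a, ha⟩ := hne
    refine ha ?_
    calc condProb p k a b₁ = condProb p (postprocess k f) a (f b₁) :=
          condProb_eq_of_jointP_eq_condIndepJoint p k f h₁.ne' (congrFun hJ (a, b₁))
      _ = condProb p (postprocess k f) a (f b₂) := by rw [hf]
      _ = condProb p k a b₂ :=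
          (condProb_eq_of_jointP_eq_condIndepJoint p k f h₂.ne' (congrFun hJ (a, b₂))).symm

end Channel

theorem distill_lt_input_rd_general {A B Y : Type*} [Fintype A] [Fintype B]
    (p : PMF A) (k : A → PMF B) (g : B → Y) (d : A → Y → ℝ) {D : ℝ}
    (hD : expDist p k (fun a b => d a (g b)) ≤ D) {b₁ b₂ : B}
    (h₁ : 0 < margSnd p k b₁) (h₂ : 0 < margSnd p k b₂) (hg : g b₁ = g b₂)
    (hne : ∃ a, condProb p k a b₁ ≠ condProb p k a b₂) :
    rate p (fun a b => d a (g b)) D < mutualInfo p k := by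
  have : Nonempty B := ⟨b₁⟩
  let f : B → B := fun b => Function.invFun g (g b)
  have hgf (b : B) : g (f b) = g b := Function.invFun_eq ⟨b, rfl⟩
  have hf : f b₁ = f b₂ := congrArg (Function.invFun g) hg
  have hD' : expDist p (postprocess k f) (fun a b => d a (g b)) ≤ D := by
    simpa only [expDist_postprocess, hgf] using hD
  exact (rate_le_mutualInfo p _ hD').trans_lt (mutualInfo_postprocess_lt p k f h₁ h₂ hf hne)

/-- If some X-optimal channel attains D_Y^min = min 𝒟*_Y(D_X;X), and every
X-optimal channel attaining D_Y^min has two distinct reconstruction points of positive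
marginal probability with identical intermediate representation but differing posteriors,
then R_X(D_Y^min;Y) < R_X(D_X;X). -/
theorem distill_lt_input_rd
    {𝒳 𝒴 : Type*} [Fintype 𝒳] [Fintype 𝒴] [Nonempty 𝒳] [Nonempty 𝒴]
    (pX : PMF 𝒳) (g : 𝒳 → 𝒴)
    (dX : 𝒳 → 𝒳 → ℝ) (hdX : ∀ x x', 0 ≤ dX x x')
    (dY : 𝒴 → 𝒴 → ℝ) (hdY : ∀ y y', 0 ≤ dY y y')
    (DX : ℝ) (hDX : 0 < DX)
    (kstar : 𝒳 → PMF 𝒳)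
    (hk_dist : expDist pX kstar dX ≤ DX)
    (hk_rate : mutualInfo pX kstar = rate pX dX DX)
    (DYmin : ℝ)
    (hattain : DYmin = expDist pX kstar (fun x xhat => dY (g x) (g xhat)))
    (hmin : ∀ k : 𝒳 → PMF 𝒳, expDist pX k dX ≤ DX →
      mutualInfo pX k = rate pX dX DX →
      DYmin ≤ expDist pX k (fun x xhat => dY (g x) (g xhat)))
    (hmerge : ∀ k : 𝒳 → PMF 𝒳, expDist pX k dX ≤ DX →
      mutualInfo pX k = rate pX dX DX →
      expDist pX k (fun x xhat => dY (g x) (g xhat)) = DYmin →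
      ∃ xhat₁ xhat₂ : 𝒳, xhat₁ ≠ xhat₂ ∧
        0 < margSnd pX k xhat₁ ∧ 0 < margSnd pX k xhat₂ ∧
        g xhat₁ = g xhat₂ ∧
        ∃ x : 𝒳, condProb pX k x xhat₁ ≠ condProb pX k x xhat₂) :
    rate pX (fun x xhat => dY (g x) (g xhat)) DYmin < rate pX dX DX := by
  obtain ⟨x₁, x₂, -, h₁, h₂, hg, hne⟩ := hmerge kstar hk_dist hk_rate hattain.symm
  exact hk_rate ▸ distill_lt_input_rd_general pX kstar g (fun x => dY (g x)) hattain.ge h₁ h₂ hg hne
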